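/- Let w(y) = (1 + √(1−y))^(−1/2), y(x) = 8x(2x+1)/(4x+1)², v(x) = x(2x+1)(4x+1), A(x, z) = w(y(x)·e^z)/w(y(x)), and C(x, z) = e^(−x·z)·A(x, z) for x > 0 and real z with y(x)·e^z < 1. Then C satisfies the partial differential equation v(x)·(∂C/∂x + z·C) − ∂C/∂z = 0 at every such (x, z), and C(x, 0) = 1. -/

import Mathlib

open Real

noncomputable def w (y : ℝ) : ℝ := (1 + Real.sqrt (1 - y)) ^ (-(1 / 2 : ℝ))

noncomputable def yFun (x : ℝ) : ℝ := 8 * x * (2 * x + 1) / (4 * x + 1) ^ 2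

noncomputable def v (x : ℝ) : ℝ := x * (2 * x + 1) * (4 * x + 1)

noncomputable def A (x z : ℝ) : ℝ := w (yFun x * Real.exp z) / w (yFun x)

noncomputable def C (x z : ℝ) : ℝ := Real.exp (-(x * z)) * A x z

noncomputable def g (y : ℝ) : ℝ := 1 / (4 * Real.sqrt (1 - y) * (1 + Real.sqrt (1 - y)))

lemma w_pos (y : ℝ) : 0 < w y := by
  unfold w
  have := Real.sqrt_nonneg (1 - y)
  positivity

lemma hasDerivAt_w (y : ℝ) (hy : y < 1) : HasDerivAt w (w y * g y) y := by
  have hr : 0 < Real.sqrt (1 - y) := Real.sqrt_pos.mpr (by linarith)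
  have h : HasDerivAt w _ y :=
    ((((hasDerivAt_id y).const_sub 1).sqrt (by simp only [id]; linarith)).const_add 1).rpow_const
      (p := -(1 / 2 : ℝ)) (Or.inl (by simp only [id]; positivity))
  convert h using 1
  simp only [id, w, g]
  rw [Real.rpow_sub_one (by positivity)]
  field_simp
  ring

lemma one_sub_yFun (x : ℝ) (hx : 0 < x) : 1 - yFun x = 1 / (4 * x + 1) ^ 2 := by
  unfold yFun
  field_simp
  ring

lemma hasDerivAt_yFun (x : ℝ) (hx : 0 < x) : HasDerivAt yFun (8 / (4 * x + 1) ^ 3) x := by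
  have hne : (4 * x + 1) ^ 2 ≠ 0 := by positivity
  have h : HasDerivAt yFun _ x :=
    ((((hasDerivAt_id x).const_mul 8).mul (((hasDerivAt_id x).const_mul 2).add_const 1))).div
      ((((hasDerivAt_id x).const_mul 4).add_const 1).pow 2) hne
  convert h using 1
  simp only [id, Pi.mul_apply, Pi.pow_apply]
  field_simp
  ring

lemma v_mul (x : ℝ) (hx : 0 < x) : yFun x = v x * (8 / (4 * x + 1) ^ 3) := by
  unfold v yFun
  field_simp

lemma key (x : ℝ) (hx : 0 < x) : yFun x * g (yFun x) = x := by
  have h : Real.sqrt (1 - yFun x) = 1 / (4 * x + 1) := by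
    rw [one_sub_yFun x hx, ← one_div_pow, Real.sqrt_sq (by positivity)]
  unfold g
  rw [h]
  unfold yFun
  field_simp
  ring

theorem central_mgf_pde (x z : ℝ) (hx : 0 < x) (hz : yFun x * Real.exp z < 1) :
    DifferentiableAt ℝ (fun t => C t z) x ∧
    DifferentiableAt ℝ (fun t => C x t) z ∧
    v x * (deriv (fun t => C t z) x + z * C x z) - deriv (fun t => C x t) z = 0 ∧
    C x 0 = 1 := by
  have hs : (0:ℝ) < 4 * x + 1 := by linarith
  have hy := one_sub_yFun x hx
  have hy1 : yFun x < 1 := by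
    have : 0 < 1 / (4 * x + 1) ^ 2 := by positivity
    linarith
  have hW := w_pos (yFun x)
  have hd := hasDerivAt_w (yFun x) hy1
  have hD := hasDerivAt_w (yFun x * Real.exp z) hz
  have hY := hasDerivAt_yFun x hx
  have hk := key x hx
  have hv := v_mul x hx
  set W' := w (yFun x * Real.exp z) * g (yFun x * Real.exp z) with hW'
  have e1 : HasDerivAt (fun t => w (yFun t * Real.exp z)) (W' * (8 / (4 * x + 1) ^ 3 * Real.exp z)) x :=
    HasDerivAt.comp (h₂ := w) x hD (hY.mul_const (Real.exp z))
  have e2 : HasDerivAt (fun t => w (yFun t)) _ x := hd.comp x hY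
  have e3 : HasDerivAt (fun t => A t z) _ x := e1.div e2 hW.ne'
  have e4 : HasDerivAt (fun t => Real.exp (-(t * z))) (Real.exp (-(x * z)) * -(1 * z)) x :=
    (((hasDerivAt_id x).mul_const z).neg).exp
  have h1 : HasDerivAt (fun t => C t z) _ x := e4.mul e3
  have f1 : HasDerivAt (fun t => w (yFun x * Real.exp t)) (W' * (yFun x * Real.exp z)) z :=
    HasDerivAt.comp (h₂ := w) z hD ((Real.hasDerivAt_exp z).const_mul (yFun x))
  have f3 : HasDerivAt (fun t => A x t) _ z := f1.div_const (w (yFun x))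
  have f4 : HasDerivAt (fun t => Real.exp (-(x * t))) (Real.exp (-(x * z)) * -(x * 1)) z :=
    (((hasDerivAt_id z).const_mul x).neg).exp
  have h2 : HasDerivAt (fun t => C x t) _ z := f4.mul f3
  refine ⟨h1.differentiableAt, h2.differentiableAt, ?_, ?_⟩
  · rw [h1.deriv, h2.deriv]
    simp only [C, A, id, Function.comp, Pi.neg_apply]
    clear h1 h2 e1 e2 e3 e4 f1 f3 f4 hD hd hY
    clear_value W'
    clear hW'
    generalize w (yFun x * Real.exp z) = P at *
    generalize Real.exp (-(x * z)) = E at *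
    generalize Real.exp z = F at *
    generalize w (yFun x) = Q at *
    generalize 8 / (4 * x + 1) ^ 3 = y' at *
    generalize g (yFun x) = G at *
    generalize yFun x = y at *
    generalize v x = V at *
    field_simp
    subst hv
    linear_combination (-(E * P)) * hk
  · simp only [C, A, mul_zero, neg_zero, Real.exp_zero, mul_one, one_mul]
    exact div_self hW.ne'
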